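/- arXiv:1111.1498 — 2 statements merged into one kernel-verified Lean document; each statement's English description precedes it below -/
import Mathlib

section
/- Let P be a finite partially ordered set, n, m : P → ℕ, and let A (a square block matrix with row and column blocks of sizes n) and B (a block matrix with row blocks of sizes n and column blocks of sizes m) be real matrices lying in the block incidence algebra I(P). Then the following are equivalent: (1) there exist N : ℕ and real matrices A_K of size N×N, B_K of size N×(Σ i, n i), C_K of size (Σ i, m i)×N, and D_K of size (Σ i, m i)×(Σ i, n i) such that the transfer function K = C_K' * (X • 1 − A_K')⁻¹ * B_K' + D_K' over RatFunc ℝ satisfies K (i,a) (j,b) = 0 whenever ¬ (j ≤ i), and the closed-loop matrix, i.e. the real square matrix with 2×2 block form [[A + B*D_K, B*C_K],[B_K, A_K]], is Hurwitz; (2) for every i ∈ P the pair (A_ii, B_ii) of diagonal blocks is stabilizable. -/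
set_option synthInstance.maxHeartbeats 1000000

/-- A block matrix, with rows indexed by `Σ i : P, Fin (n i)` and columns by
`Σ j : P, Fin (m j)`, lies in the block incidence algebra of the poset `P` if
the block `M_{ij}` vanishes whenever `¬ (j ≤ i)`. -/
def BlockIncidence {P : Type*} [PartialOrder P] {R : Type*} [Zero R] {n m : P → ℕ}
    (M : Matrix (Σ i : P, Fin (n i)) (Σ j : P, Fin (m j)) R) : Prop :=
  ∀ (i : P) (a : Fin (n i)) (j : P) (b : Fin (m j)), ¬ (j ≤ i) → M ⟨i, a⟩ ⟨j, b⟩ = 0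

/-- The `(i,i)` diagonal block of a block matrix. -/
def diagBlock {P : Type*} {R : Type*} {n m : P → ℕ}
    (M : Matrix (Σ i : P, Fin (n i)) (Σ j : P, Fin (m j)) R) (i : P) :
    Matrix (Fin (n i)) (Fin (m i)) R :=
  Matrix.of fun a b => M ⟨i, a⟩ ⟨i, b⟩

/-- The transfer function `C (X·1 − A)⁻¹ B + D` of the realization `(A, B, C, D)`,
a matrix over the field of rational functions. -/
noncomputable def transferFn {F : Type*} [Field F] {N m q : Type*} [Fintype N] [DecidableEq N]
    (A : Matrix N N F) (B : Matrix N m F) (C : Matrix q N F) (D : Matrix q m F) :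
    Matrix q m (RatFunc F) :=
  C.map RatFunc.C * ((RatFunc.X : RatFunc F) • (1 : Matrix N N (RatFunc F)) -
    A.map RatFunc.C)⁻¹ * B.map RatFunc.C + D.map RatFunc.C

/-- A real square matrix is Hurwitz if every complex eigenvalue has negative real part. -/
def IsHurwitz {k : Type*} [Fintype k] [DecidableEq k] (M : Matrix k k ℝ) : Prop :=
  ∀ z ∈ spectrum ℂ (M.map (algebraMap ℝ ℂ)), z.re < 0

/-- A pair `(A, B)` is stabilizable if some state feedback `K` makes `A + B K` Hurwitz. -/
def IsStabilizable {n m : ℕ} (A : Matrix (Fin n) (Fin n) ℝ)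
    (B : Matrix (Fin n) (Fin m) ℝ) : Prop :=
  ∃ K : Matrix (Fin m) (Fin n) ℝ, IsHurwitz (A + B * K)

open Polynomial

lemma hurwitz_roots {k : Type*} [Fintype k] [DecidableEq k] {M : Matrix k k ℝ} :
    IsHurwitz M ↔ ∀ z : ℂ, aeval z M.charpoly = 0 → z.re < 0 := by
  unfold IsHurwitz
  have : ∀ z : ℂ, z ∈ spectrum ℂ (M.map (algebraMap ℝ ℂ)) ↔ aeval z M.charpoly = 0 := by
    intro z
    rw [Matrix.mem_spectrum_iff_isRoot_charpoly, Matrix.charpoly_map, IsRoot.def, eval_map_algebraMap]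
  simp only [this]

lemma hurwitz_of_annihilator {k : Type*} [Fintype k] [DecidableEq k] {M : Matrix k k ℝ}
    (q : ℝ[X]) (hq : aeval M q = 0) (hr : ∀ z : ℂ, aeval z q = 0 → z.re < 0) : IsHurwitz M := by
  intro z hz
  apply hr
  have h1 : aeval (M.map (algebraMap ℝ ℂ)) q = 0 := by
    have := congrArg (Algebra.ofId ℝ ℂ).mapMatrix hq
    rw [← aeval_algHom_apply, map_zero] at this
    exact this
  have h2 : aeval (M.map (algebraMap ℝ ℂ)) (q.map (algebraMap ℝ ℂ)) = 0 := by
    rw [aeval_map_algebraMap, h1]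
  have h3 := spectrum.subset_polynomial_aeval (M.map (algebraMap ℝ ℂ)) (q.map (algebraMap ℝ ℂ)) ⟨z, hz, rfl⟩
  rw [h2] at h3
  simp only [eval_map_algebraMap] at h3
  by_contra hne
  refine h3 ?_
  rw [spectrum.mem_resolventSet_iff, sub_zero]
  exact (IsUnit.mk0 _ hne).map (algebraMap ℂ (Matrix k k ℂ))

lemma deadbeat {V U : Type*} [AddCommGroup V] [Module ℝ V] [FiniteDimensional ℝ V]
    [AddCommGroup U] [Module ℝ U] (N : V →ₗ[ℝ] V) (B : U →ₗ[ℝ] V) :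
    ∃ (S : Submodule ℝ V) (K : V →ₗ[ℝ] U) (n : ℕ),
      LinearMap.range B ≤ S ∧ (∀ x ∈ S, (N + B ∘ₗ K) x ∈ S) ∧
      ∀ x ∈ S, ((N + B ∘ₗ K) ^ n) x = 0 := by
  let Q : Set (Submodule ℝ V) := {S | ∃ (K : V →ₗ[ℝ] U) (n : ℕ),
    (∀ x ∈ S, (N + B ∘ₗ K) x ∈ S) ∧ ∀ x ∈ S, ((N + B ∘ₗ K) ^ n) x = 0}
  have hQ : Q.Nonempty := ⟨⊥, 0, 0, by simp, by simp⟩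
  obtain ⟨S, hS, hmax⟩ := (wellFounded_gt (α := Submodule ℝ V)).has_min Q hQ
  obtain ⟨K, n, h1, h2⟩ := hS
  refine ⟨S, K, n, ?_, h1, h2⟩
  set T := S ⊔ LinearMap.range B with hT
  have hST : S ≤ T.comap N := by
    intro x hx
    rw [Submodule.mem_comap]
    have : N x = (N + B ∘ₗ K) x + B (- K x) := by simp
    rw [this]
    exact Submodule.add_mem_sup (h1 x hx) ⟨_, rfl⟩
  have hTS : T.comap N ≤ S := by
    intro x hx
    by_contra hxS
    rw [Submodule.mem_comap, hT, Submodule.mem_sup] at hx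
    obtain ⟨s, hs, _, ⟨u, rfl⟩, hsu⟩ := hx
    obtain ⟨φ, hφ, hφS⟩ := Submodule.exists_le_ker_of_notMem hxS
    let K' : V →ₗ[ℝ] U := K + φ.smulRight ((φ x)⁻¹ • (- u - K x))
    have hK : ∀ y ∈ S, (N + B ∘ₗ K') y = (N + B ∘ₗ K) y := by
      intro y hy
      have : φ y = 0 := hφS hy
      simp [K', this]
    have hx' : (N + B ∘ₗ K') x = s := by
      simp [K', smul_smul, hφ, ← hsu]
    have hkey : ∀ y ∈ S ⊔ Submodule.span ℝ {x}, (N + B ∘ₗ K') y ∈ S := by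
      intro y hy
      obtain ⟨t, ht, r, hr, rfl⟩ := Submodule.mem_sup.1 hy
      obtain ⟨c, rfl⟩ := Submodule.mem_span_singleton.1 hr
      rw [map_add, map_smul, hK t ht, hx']
      exact S.add_mem (h1 t ht) (S.smul_mem c hs)
    have hpow : ∀ k, ∀ y ∈ S, ((N + B ∘ₗ K') ^ k) y = ((N + B ∘ₗ K) ^ k) y := by
      intro k
      induction k with
      | zero => simp
      | succ k ih =>
        intro y hy
        rw [pow_succ, pow_succ, Module.End.mul_apply, Module.End.mul_apply, hK y hy, ih _ (h1 y hy)]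
    refine hmax (S ⊔ Submodule.span ℝ {x}) ⟨K', n + 1, ?_, ?_⟩ ?_
    · intro y hy
      exact Submodule.mem_sup_left (hkey y hy)
    · intro y hy
      rw [pow_succ, Module.End.mul_apply, hpow _ _ (hkey y hy), h2 _ (hkey y hy)]
    · refine lt_of_le_of_ne le_sup_left ?_
      intro h
      apply hxS
      rw [h]
      exact Submodule.mem_sup_right (Submodule.mem_span_singleton_self x)
  have hle : S ≤ T := le_sup_left
  have hinj : Function.Injective (S.mapQ T N hST) := by
    rw [← LinearMap.ker_eq_bot, Submodule.ker_mapQ, le_antisymm hTS hST]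
    exact Submodule.mkQ_map_self S
  have hfr := LinearMap.finrank_le_finrank_of_injective hinj
  have e1 := S.finrank_quotient_add_finrank
  have e2 := T.finrank_quotient_add_finrank
  have : S = T := Submodule.eq_of_le_of_finrank_le hle (by omega)
  rw [this]
  exact le_sup_right

open Matrix

lemma telescope {n m : ℕ} (A : Matrix (Fin n) (Fin n) ℝ) (B : Matrix (Fin n) (Fin m) ℝ)
    (T : Matrix (Fin n) (Fin n) ℝ[X]) (χ : ℝ[X])
    (H : ∀ w : Fin n → ℝ, w ᵥ* B = 0 → ∀ b, X * ∑ a, C (w a) * T a b -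
      ∑ a, C ((w ᵥ* A) a) * T a b = χ * C (w b))
    (w : Fin n → ℝ) (hw : ∀ k : ℕ, (w ᵥ* (A ^ k)) ᵥ* B = 0) : w ᵥ* (aeval A χ) = 0 := by
  funext b
  let g : ℕ → ℝ[X] := fun k => ∑ a, C ((w ᵥ* (A ^ k)) a) * T a b
  have hg : ∀ k, X * g k - g (k + 1) = χ * C ((w ᵥ* (A ^ k)) b) := by
    intro k
    have := H _ (hw k) b
    rw [vecMul_vecMul, ← pow_succ] at this
    exact this
  let d := (Finset.univ.sup fun a => (T a b).natDegree)
  have hd : ∀ k, (g k).natDegree ≤ d := by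
    intro k
    refine natDegree_sum_le_of_forall_le _ _ fun a _ => ?_
    refine (natDegree_C_mul_le _ _).trans ?_
    exact Finset.le_sup (f := fun a => (T a b).natDegree) (Finset.mem_univ a)
  let D := max (d + 1) (χ.natDegree) + 1
  let s : ℕ → ℝ := fun k => (X * g k).coeff k
  have hs : ∀ k, χ.coeff k * (w ᵥ* (A ^ k)) b = s k - s (k + 1) := by
    intro k
    have := congrArg (fun p => coeff p k) (hg k)
    simp only [coeff_sub, coeff_mul_C] at this
    rw [← this]
    simp [s, coeff_X_mul]
  have hsD : s D = 0 := by
    simp only [s, D]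
    rw [coeff_X_mul]
    apply coeff_eq_zero_of_natDegree_lt
    have := hd (max (d + 1) (χ.natDegree) + 1)
    have := le_max_left (d+1) χ.natDegree
    omega
  rw [aeval_eq_sum_range' (n := D) (by have := le_max_right (d+1) χ.natDegree; simp only [D]; omega)]
  have : (w ᵥ* (∑ i ∈ Finset.range D, χ.coeff i • A ^ i)) b
      = ∑ i ∈ Finset.range D, χ.coeff i * (w ᵥ* (A ^ i)) b := by
    rw [vecMul_sum, Finset.sum_apply]
    refine Finset.sum_congr rfl fun i _ => ?_
    rw [vecMul_smul, Pi.smul_apply, smul_eq_mul]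
  rw [this, Finset.sum_congr rfl fun i _ => hs i, Finset.sum_range_sub', hsD]
  simp [s]

lemma stabilizable_of {n m : ℕ} (A : Matrix (Fin n) (Fin n) ℝ) (B : Matrix (Fin n) (Fin m) ℝ)
    (T : Matrix (Fin n) (Fin n) ℝ[X]) (χ : ℝ[X])
    (H : ∀ w : Fin n → ℝ, w ᵥ* B = 0 → ∀ b, X * ∑ a, C (w a) * T a b -
      ∑ a, C ((w ᵥ* A) a) * T a b = χ * C (w b))
    (hr : ∀ z : ℂ, aeval z χ = 0 → z.re < 0) : IsStabilizable A B := by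
  obtain ⟨S, K, r, hB, hN, hn⟩ := deadbeat (toLin' (A + 1)) (toLin' B)
  let A' := A + B * LinearMap.toMatrix' K
  have hA' : toLin' (A + 1) + toLin' B ∘ₗ K = toLin' (A' + 1) := by
    simp only [A', map_add, toLin'_mul, toLin'_toMatrix']
    abel
  rw [hA'] at hN hn
  have hAS : ∀ x ∈ S, A' *ᵥ x ∈ S := by
    intro x hx
    have := S.sub_mem (hN x hx) hx
    simpa [add_mulVec] using this
  have hAkS : ∀ k : ℕ, ∀ x ∈ S, (A' ^ k) *ᵥ x ∈ S := by
    intro k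
    induction k with
    | zero => simp
    | succ k ih =>
      intro x hx
      rw [pow_succ, ← mulVec_mulVec]
      exact ih _ (hAS x hx)
  refine ⟨LinearMap.toMatrix' K, ?_⟩
  have hχ : ∀ x, (aeval A' χ) *ᵥ x ∈ S := by
    intro x
    by_contra hx
    obtain ⟨φ, hφ, hφS⟩ := Submodule.exists_le_ker_of_notMem hx
    let w : Fin n → ℝ := fun a => φ (Pi.single a 1)
    have hw : ∀ y, φ y = w ⬝ᵥ y := by
      intro y
      conv_lhs => rw [← Finset.univ_sum_single y]
      rw [map_sum, dotProduct]
      refine Finset.sum_congr rfl fun a _ => ?_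
      have : (Pi.single a (y a) : Fin n → ℝ) = y a • Pi.single a 1 := by
        rw [← Pi.single_smul]; simp
      rw [this, map_smul, smul_eq_mul, mul_comm]
    have h0 : w ᵥ* (aeval A' χ) = 0 := by
      apply telescope A' B T χ
      · intro v hv b
        rw [← H v hv b]
        simp only [A', vecMul_add, ← vecMul_vecMul, hv, zero_vecMul, add_zero]
      · intro k
        rw [vecMul_vecMul]
        refine funext fun j => ?_
        have : φ ((A' ^ k) *ᵥ (B *ᵥ Pi.single j 1)) = 0 :=
          hφS (hAkS k _ (hB ⟨Pi.single j 1, by simp⟩))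
        rw [hw, mulVec_mulVec, dotProduct_mulVec, dotProduct_single, mul_one] at this
        exact this
    apply hφ
    rw [hw, dotProduct_mulVec, h0, zero_dotProduct]
  apply hurwitz_of_annihilator ((X + 1) ^ r * χ)
  · apply Matrix.toLin'.injective
    rw [map_zero]
    refine LinearMap.ext fun j => ?_
    rw [map_mul, toLin'_mul, LinearMap.comp_apply]
    simp only [map_pow, map_add, aeval_X, map_one]
    have := hn _ (hχ j)
    rw [toLin'_pow, toLin'_apply (aeval _ χ)]
    exact this
  · intro z hz
    rw [map_mul, mul_eq_zero] at hz
    rcases hz with hz | hz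
    · simp only [map_pow, map_add, aeval_X, map_one] at hz
      have := eq_neg_of_add_eq_zero_left (show z + 1 = 0 by by_contra h; exact pow_ne_zero r h hz)
      simp [this]
    · exact hr z hz

lemma hurwitz_of_diag {P : Type*} [PartialOrder P] [Fintype P] [DecidableEq P] (n : P → ℕ)
    (M : Matrix (Σ i : P, Fin (n i)) (Σ j : P, Fin (n j)) ℝ) (hM : BlockIncidence M)
    (h : ∀ i, IsHurwitz (diagBlock M i)) : IsHurwitz M := by
  intro z hz
  rw [← Matrix.spectrum_toLin', ← Module.End.hasEigenvalue_iff_mem_spectrum] at hz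
  obtain ⟨v, hv⟩ := hz.exists_hasEigenvector
  have hv0 := hv.2
  have hve := hv.apply_eq_smul
  rw [toLin'_apply] at hve
  let Q : Set P := {i | ∃ a, v ⟨i, a⟩ ≠ 0}
  have hQ : Q.Nonempty := by
    by_contra hne
    apply hv0
    funext ⟨i, a⟩
    by_contra ha
    exact hne ⟨i, a, ha⟩
  obtain ⟨i, ⟨a, ha⟩, hmin⟩ := (wellFounded_lt (α := P)).has_min Q hQ
  apply h i z
  rw [← Matrix.spectrum_toLin', ← Module.End.hasEigenvalue_iff_mem_spectrum]
  refine Module.End.hasEigenvalue_of_hasEigenvector (x := fun a => v ⟨i, a⟩) ⟨?_, ?_⟩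
  · rw [Module.End.mem_eigenspace_iff, toLin'_apply]
    funext c
    have := congrFun hve ⟨i, c⟩
    simp only [Pi.smul_apply] at this ⊢
    rw [← this]
    simp only [mulVec, dotProduct]
    rw [Fintype.sum_sigma, Finset.sum_eq_single i]
    · simp [diagBlock]
    · intro j _ hj
      refine Finset.sum_eq_zero fun d _ => ?_
      by_cases hji : j ≤ i
      · have : ¬ j ∈ Q := fun hjQ => hmin j hjQ (lt_of_le_of_ne hji hj)
        have : v ⟨j, d⟩ = 0 := by
          by_contra hd
          exact this ⟨d, hd⟩
        rw [this, mul_zero]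
      · simp [hM i c j d hji]
    · simp
  · intro h0
    exact ha (congrFun h0 a)

lemma blockIncidence_mul {P : Type*} [PartialOrder P] [Fintype P] {R : Type*} [CommRing R]
    {n m l : P → ℕ} {M : Matrix (Σ i : P, Fin (n i)) (Σ j : P, Fin (m j)) R}
    {M' : Matrix (Σ i : P, Fin (m i)) (Σ j : P, Fin (l j)) R}
    (h : BlockIncidence M) (h' : BlockIncidence M') : BlockIncidence (M * M') := by
  intro i a j b hij
  rw [mul_apply]
  refine Finset.sum_eq_zero fun ⟨k, c⟩ _ => ?_
  by_cases hk : k ≤ i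
  · rw [h' k c j b fun hjk => hij (hjk.trans hk), mul_zero]
  · rw [h i a k c hk, zero_mul]

lemma diagBlock_mul {P : Type*} [PartialOrder P] [Fintype P] {R : Type*} [CommRing R]
    {n m l : P → ℕ} {M : Matrix (Σ i : P, Fin (n i)) (Σ j : P, Fin (m j)) R}
    {M' : Matrix (Σ i : P, Fin (m i)) (Σ j : P, Fin (l j)) R} (i : P)
    (h : ∀ j ≠ i, ∀ a c b, M ⟨i, a⟩ ⟨j, c⟩ * M' ⟨j, c⟩ ⟨i, b⟩ = 0) :
    diagBlock (M * M') i = diagBlock M i * diagBlock M' i := by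
  ext a b
  simp only [diagBlock, of_apply, mul_apply]
  rw [Fintype.sum_sigma, Finset.sum_eq_single i]
  · intro j _ hj
    exact Finset.sum_eq_zero fun c _ => h j hj a c b
  · simp

lemma diagBlock_mul' {P : Type*} [PartialOrder P] [Fintype P] {R : Type*} [CommRing R]
    {n m l : P → ℕ} {M : Matrix (Σ i : P, Fin (n i)) (Σ j : P, Fin (m j)) R}
    {M' : Matrix (Σ i : P, Fin (m i)) (Σ j : P, Fin (l j)) R} (i : P)
    (h : BlockIncidence M) (h' : BlockIncidence M') :
    diagBlock (M * M') i = diagBlock M i * diagBlock M' i := by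
  apply diagBlock_mul
  intro j hj a c b
  by_cases hk : j ≤ i
  · rw [h' j c i b fun hjk => hj (le_antisymm hk hjk), mul_zero]
  · rw [h i a j c hk, zero_mul]

lemma diagBlock_mul_inv {P : Type*} [PartialOrder P] [Fintype P] [DecidableEq P]
    {R : Type*} [Field R]
    {n : P → ℕ} {M T : Matrix (Σ i : P, Fin (n i)) (Σ j : P, Fin (n j)) R} (i : P) (c : R)
    (hc : c ≠ 0) (h : BlockIncidence M) (hT : M * T = c • 1) :
    diagBlock M i * diagBlock T i = c • 1 := by
  have h1 : M * (c⁻¹ • T) = 1 := by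
    rw [mul_smul_comm, hT, smul_smul, inv_mul_cancel₀ hc, one_smul]
  let _ : Invertible M := invertibleOfRightInverse _ _ h1
  let b : (Σ i : P, Fin (n i)) → (LinearExtension P)ᵒᵈ :=
    fun x => OrderDual.toDual (toLinearExtension x.1)
  have hb : BlockTriangular M b := by
    intro x y hxy
    refine h x.1 x.2 y.1 y.2 fun hle => ?_
    exact absurd (toLinearExtension.monotone hle) (not_le.2 hxy)
  have hbi := blockTriangular_inv_of_blockTriangular hb
  rw [inv_eq_right_inv h1] at hbi
  rw [← diagBlock_mul, hT]
  · ext a b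
    simp [diagBlock, one_apply]
  · intro j hj a d b'
    by_cases hle : j ≤ i
    · have hlt : toLinearExtension j < toLinearExtension i :=
        lt_of_le_of_ne (toLinearExtension.monotone hle) (fun e => hj e)
      have := @hbi ⟨j, d⟩ ⟨i, b'⟩ hlt
      rw [Matrix.smul_apply, smul_eq_mul] at this
      rw [(mul_eq_zero.1 this).resolve_left (inv_ne_zero hc), mul_zero]
    · rw [h i a j d hle, zero_mul]

lemma closed_loop {S U : Type*} [Fintype S] [DecidableEq S] [Fintype U] {N : ℕ}
    (A : Matrix S S ℝ) (B : Matrix S U ℝ) (A_K : Matrix (Fin N) (Fin N) ℝ)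
    (B_K : Matrix (Fin N) S ℝ) (C_K : Matrix U (Fin N) ℝ) (D_K : Matrix U S ℝ) :
    ∃ T : Matrix S S ℝ[X],
      ((RatFunc.X : RatFunc ℝ) • (1 : Matrix S S (RatFunc ℝ)) - A.map RatFunc.C -
        B.map RatFunc.C * transferFn A_K B_K C_K D_K) * T.map (algebraMap ℝ[X] (RatFunc ℝ)) =
      algebraMap ℝ[X] (RatFunc ℝ)
        (Matrix.fromBlocks (A + B * D_K) (B * C_K) B_K A_K).charpoly • 1 := by
  set M := Matrix.fromBlocks (A + B * D_K) (B * C_K) B_K A_K with hM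
  let φ := algebraMap ℝ[X] (RatFunc ℝ)
  let G := (charmatrix M).adjugate
  have h1 : charmatrix M * G = M.charpoly • 1 := mul_adjugate _
  have h2 : (charmatrix M).map φ * G.map φ = φ M.charpoly • 1 := by
    rw [← Matrix.map_mul, h1]
    ext x y
    simp [one_apply, apply_ite φ]
  have h3 : (charmatrix M).map φ =
      fromBlocks ((RatFunc.X : RatFunc ℝ) • 1 - A.map RatFunc.C -
        B.map RatFunc.C * D_K.map RatFunc.C) (-(B.map RatFunc.C * C_K.map RatFunc.C))
        (-(B_K.map RatFunc.C)) ((RatFunc.X : RatFunc ℝ) • 1 - A_K.map RatFunc.C) := by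
    have hm : ∀ x y, (B.map (RatFunc.C : ℝ →+* RatFunc ℝ) * D_K.map RatFunc.C) x y =
        RatFunc.C ((B * D_K) x y) := by
      intro x y
      rw [← Matrix.map_mul, map_apply]
    have hm' : ∀ x y, (B.map (RatFunc.C : ℝ →+* RatFunc ℝ) * C_K.map RatFunc.C) x y =
        RatFunc.C ((B * C_K) x y) := by
      intro x y
      rw [← Matrix.map_mul, map_apply]
    ext (x | x) (y | y)
    · by_cases hxy : x = y
      · subst hxy; simp [hM, φ, hm, hm', sub_sub]
      · simp [hM, φ, hm, hm', hxy, sub_sub]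
    · simp [hM, φ, hm, hm']
    · simp [hM, φ, hm, hm']
    · by_cases hxy : x = y
      · subst hxy; simp [hM, φ, hm, hm']
      · simp [hM, φ, hm, hm', hxy]
  refine ⟨G.toBlocks₁₁, ?_⟩
  have h4 : G.map φ = fromBlocks (G.toBlocks₁₁.map φ) (G.toBlocks₁₂.map φ)
      (G.toBlocks₂₁.map φ) (G.toBlocks₂₂.map φ) := by
    rw [← fromBlocks_map, fromBlocks_toBlocks]
  rw [h3, h4, fromBlocks_multiply, ← fromBlocks_one, fromBlocks_smul, fromBlocks_inj] at h2
  obtain ⟨e1, -, e2, -⟩ := h2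
  set Y := (RatFunc.X : RatFunc ℝ) • (1 : Matrix (Fin N) (Fin N) (RatFunc ℝ)) -
    A_K.map RatFunc.C with hY
  have hYdet : IsUnit Y.det := by
    have : Y = (charmatrix A_K).map φ := by
      ext x y
      by_cases hxy : x = y
      · subst hxy; simp [hY, φ]
      · simp [hY, φ, hxy]
    rw [this]
    have h := RingHom.map_det φ (charmatrix A_K)
    rw [RingHom.mapMatrix_apply] at h
    rw [← h]
    refine IsUnit.mk0 _ ?_
    rw [Ne, map_eq_zero_iff φ (RatFunc.algebraMap_injective ℝ)]
    exact (charpoly_monic A_K).ne_zero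
  have e3 : G.toBlocks₂₁.map φ = Y⁻¹ * B_K.map RatFunc.C * G.toBlocks₁₁.map φ := by
    have : Y * G.toBlocks₂₁.map φ = B_K.map RatFunc.C * G.toBlocks₁₁.map φ := by
      rw [smul_zero, Matrix.neg_mul, neg_add_eq_zero] at e2
      exact e2.symm
    rw [Matrix.mul_assoc, ← this, ← Matrix.mul_assoc, nonsing_inv_mul _ hYdet, Matrix.one_mul]
  rw [e3] at e1
  rw [← e1, transferFn, ← hY]
  simp only [Matrix.sub_mul, Matrix.mul_add, Matrix.add_mul, Matrix.neg_mul, Matrix.mul_assoc]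
  simp only [φ]
  abel

/-- A poset-causal system is stabilizable by a poset-causal (dynamic, state-feedback)
controller if and only if all the diagonal sub-systems `(A_ii, B_ii)` are stabilizable. -/
theorem posetCausal_stabilizable_iff {P : Type*} [PartialOrder P] [Fintype P] [DecidableEq P]
    (n m : P → ℕ)
    (A : Matrix (Σ i : P, Fin (n i)) (Σ j : P, Fin (n j)) ℝ)
    (B : Matrix (Σ i : P, Fin (n i)) (Σ j : P, Fin (m j)) ℝ)
    (hA : BlockIncidence A) (hB : BlockIncidence B) :
    (∃ (N : ℕ)
       (A_K : Matrix (Fin N) (Fin N) ℝ)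
       (B_K : Matrix (Fin N) (Σ j : P, Fin (n j)) ℝ)
       (C_K : Matrix (Σ i : P, Fin (m i)) (Fin N) ℝ)
       (D_K : Matrix (Σ i : P, Fin (m i)) (Σ j : P, Fin (n j)) ℝ),
       (∀ (i : P) (a : Fin (m i)) (j : P) (b : Fin (n j)), ¬ (j ≤ i) →
         transferFn A_K B_K C_K D_K ⟨i, a⟩ ⟨j, b⟩ = 0) ∧
       IsHurwitz (Matrix.fromBlocks (A + B * D_K) (B * C_K) B_K A_K)) ↔
    (∀ i : P, IsStabilizable (diagBlock A i) (diagBlock B i)) := by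
  constructor
  · rintro ⟨N, A_K, B_K, C_K, D_K, hK, hH⟩ i
    obtain ⟨T, hT⟩ := closed_loop A B A_K B_K C_K D_K
    rw [hurwitz_roots] at hH
    have hχ0 := (charpoly_monic (Matrix.fromBlocks (A + B * D_K) (B * C_K) B_K A_K)).ne_zero
    set χ := (Matrix.fromBlocks (A + B * D_K) (B * C_K) B_K A_K).charpoly
    have hK' : BlockIncidence (transferFn A_K B_K C_K D_K) := hK
    set K := transferFn A_K B_K C_K D_K
    have hBC : BlockIncidence (B.map (RatFunc.C : ℝ →+* RatFunc ℝ)) := by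
      intro i a j b hij
      simp [hB i a j b hij]
    have hBK := blockIncidence_mul hBC hK'
    have hF : BlockIncidence ((RatFunc.X : RatFunc ℝ) •
        (1 : Matrix (Σ i : P, Fin (n i)) (Σ i : P, Fin (n i)) (RatFunc ℝ)) - A.map RatFunc.C -
        B.map RatFunc.C * K) := by
      intro i a j b hij
      have hne : (⟨i, a⟩ : Σ i : P, Fin (n i)) ≠ ⟨j, b⟩ := by
        intro e
        have := congrArg Sigma.fst e
        exact hij (le_of_eq this.symm)
      rw [Matrix.sub_apply, Matrix.sub_apply, hBK i a j b hij, Matrix.smul_apply, one_apply_ne hne, map_apply,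
        hA i a j b hij]
      simp
    have hd := diagBlock_mul_inv i _
      ((map_ne_zero_iff _ (RatFunc.algebraMap_injective ℝ)).2 hχ0) hF hT
    have hFi : diagBlock ((RatFunc.X : RatFunc ℝ) •
        (1 : Matrix (Σ i : P, Fin (n i)) (Σ i : P, Fin (n i)) (RatFunc ℝ)) - A.map RatFunc.C -
        B.map RatFunc.C * K) i = (RatFunc.X : RatFunc ℝ) • 1 - (diagBlock A i).map RatFunc.C -
        (diagBlock B i).map RatFunc.C * diagBlock K i := by
      have : (diagBlock B i).map (RatFunc.C : ℝ →+* RatFunc ℝ) =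
        diagBlock (B.map (RatFunc.C : ℝ →+* RatFunc ℝ)) i := rfl
      rw [this, ← diagBlock_mul' i hBC hK']
      ext a b
      simp [diagBlock, one_apply]
    rw [hFi] at hd
    refine stabilizable_of _ _ (diagBlock T i) χ ?_ hH
    intro w hw b
    apply RatFunc.algebraMap_injective ℝ
    let w' : Fin (n i) → RatFunc ℝ := fun a => RatFunc.C (w a)
    have hmap : ∀ {l : ℕ} (Z : Matrix (Fin (n i)) (Fin l) ℝ), w' ᵥ* Z.map RatFunc.C =
        fun a => RatFunc.C ((w ᵥ* Z) a) := by
      intro l Z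
      funext a
      simp [vecMul, dotProduct, w']
    have h := congrFun (congrArg (fun Z => w' ᵥ* Z) hd) b
    simp only [← vecMul_vecMul, vecMul_sub, hmap, hw] at h
    have hz : (fun a : Fin (m i) => (RatFunc.C ((0 : Fin (m i) → ℝ) a) : RatFunc ℝ)) = 0 := by
      funext a; simp
    rw [hz, zero_vecMul, sub_zero, sub_vecMul, vecMul_smul, vecMul_smul, vecMul_one,
      smul_vecMul] at h
    simpa [vecMul, dotProduct, w', diagBlock] using h
  · intro h
    choose K hK using h
    refine ⟨0, 0, 0, 0, blockDiagonal' K, ?_, ?_⟩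
    · intro i a j b hij
      have hne : i ≠ j := fun e => hij (le_of_eq e.symm)
      simp [transferFn, blockDiagonal'_apply_ne _ _ _ hne]
    · have hD : BlockIncidence (blockDiagonal' K) := by
        intro i a j b hij
        have hne : i ≠ j := fun e => hij (le_of_eq e.symm)
        exact blockDiagonal'_apply_ne _ _ _ hne
      have hH : IsHurwitz (A + B * blockDiagonal' K) := by
        apply hurwitz_of_diag
        · intro i a j b hij
          rw [Matrix.add_apply, hA i a j b hij, blockIncidence_mul hB hD i a j b hij, add_zero]
        · intro i
          have : diagBlock (A + B * blockDiagonal' K) i = diagBlock A i + diagBlock B i * K i := by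
            have e : K i = diagBlock (blockDiagonal' K) i := by
              ext a b
              simp [diagBlock]
            conv_rhs => rw [e]
            rw [← diagBlock_mul' i hB hD]
            rfl
          rw [this]
          exact hK i
      rw [hurwitz_roots] at hH ⊢
      rw [Matrix.mul_zero, charpoly_fromBlocks_zero₁₂]
      intro z hz
      apply hH
      simpa [charpoly] using hz
end

section
/- Let P be a finite partially ordered set, n, m : P → ℕ, and let A (square, blocks of sizes n) and B (row blocks of sizes n, column blocks of sizes m) be real block matrices lying in the block incidence algebra I(P). Then there exists a real block matrix K (row blocks of sizes m, column blocks of sizes n) lying in I(P) such that A + B*K is Hurwitz if and only if for every i ∈ P the pair of diagonal blocks (A_ii, B_ii) is stabilizable. Moreover, when the diagonal pairs are all stabilizable, K can be chosen block diagonal (i.e. K (i,a) (j,b) = 0 whenever i ≠ j). -/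
theorem aux_det {P : Type*} [PartialOrder P] [Fintype P] [DecidableEq P] {R : Type*} [CommRing R]
    {n : P → ℕ} (M : Matrix (Σ i : P, Fin (n i)) (Σ j : P, Fin (n j)) R)
    (hM : BlockIncidence M) : M.det = ∏ i, (diagBlock M i).det := by
  classical
  let e : P ≃ (LinearExtension P)ᵒᵈ := OrderDual.toDual
  letI : Fintype (LinearExtension P)ᵒᵈ := Fintype.ofEquiv P e
  let b : (Σ i : P, Fin (n i)) → (LinearExtension P)ᵒᵈ := fun x => e x.1
  have hb : M.BlockTriangular b := by
    rintro ⟨i, a⟩ ⟨j, c⟩ h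
    apply hM
    intro hji
    have h2 : (toLinearExtension j) ≤ toLinearExtension i := toLinearExtension.monotone hji
    have h3 : (toLinearExtension i) < toLinearExtension j := h
    exact absurd h2 (not_le.mpr h3)
  rw [hb.det_fintype, ← e.prod_comp]
  refine Finset.prod_congr rfl fun i _ => ?_
  let f : Fin (n i) ≃ {x // b x = e i} :=
    Equiv.ofBijective (fun a => ⟨⟨i, a⟩, rfl⟩) ⟨by
      intro a c h
      simpa using h, by
      rintro ⟨⟨j, a⟩, h⟩
      obtain rfl : j = i := e.injective h
      exact ⟨a, rfl⟩⟩
  rw [← Matrix.det_submatrix_equiv_self f]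
  rfl

theorem aux_spec {k : Type*} [Fintype k] [DecidableEq k] (M : Matrix k k ℂ) (z : ℂ) :
    z ∈ spectrum ℂ M ↔ (algebraMap ℂ (Matrix k k ℂ) z - M).det = 0 := by
  rw [spectrum.mem_iff, Matrix.isUnit_iff_isUnit_det, isUnit_iff_ne_zero, not_not]

theorem aux_hurwitz {P : Type*} [PartialOrder P] [Fintype P] [DecidableEq P]
    {n : P → ℕ} (M : Matrix (Σ i : P, Fin (n i)) (Σ j : P, Fin (n j)) ℝ)
    (hM : BlockIncidence M) : IsHurwitz M ↔ ∀ i, IsHurwitz (diagBlock M i) := by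
  have key : ∀ z, z ∈ spectrum ℂ (M.map (algebraMap ℝ ℂ)) ↔
      ∃ i, z ∈ spectrum ℂ ((diagBlock M i).map (algebraMap ℝ ℂ)) := by
    intro z
    simp only [aux_spec]
    rw [aux_det, Finset.prod_eq_zero_iff]
    · simp only [Finset.mem_univ, true_and]
      refine exists_congr fun i => ?_
      have : diagBlock (algebraMap ℂ (Matrix (Σ i : P, Fin (n i)) (Σ j : P, Fin (n j)) ℂ) z
          - M.map (algebraMap ℝ ℂ)) i = algebraMap ℂ (Matrix (Fin (n i)) (Fin (n i)) ℂ) z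
          - (diagBlock M i).map (algebraMap ℝ ℂ) := by
        ext a c
        simp [diagBlock, Matrix.algebraMap_matrix_apply]
      rw [this]
    · intro i a j c h
      have hne : i ≠ j := fun e => h e.ge
      simp [Matrix.algebraMap_matrix_apply, hne, hM i a j c h]
  unfold IsHurwitz
  simp only [key]
  exact ⟨fun h i z hz => h z ⟨i, hz⟩, fun h z ⟨i, hz⟩ => h i z hz⟩

theorem aux_mul {P : Type*} [PartialOrder P] [Fintype P]
    {n m l : P → ℕ} (B : Matrix (Σ i : P, Fin (n i)) (Σ j : P, Fin (m j)) ℝ)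
    (K : Matrix (Σ i : P, Fin (m i)) (Σ j : P, Fin (l j)) ℝ)
    (hB : BlockIncidence B) (hK : BlockIncidence K) : BlockIncidence (B * K) ∧
      ∀ i, diagBlock (B * K) i = diagBlock B i * diagBlock K i := by
  constructor
  · intro i a j c h
    rw [Matrix.mul_apply]
    refine Finset.sum_eq_zero ?_
    rintro ⟨k, d⟩ _
    by_cases h1 : k ≤ i
    · rw [hK k d j c fun h2 => h (h2.trans h1), mul_zero]
    · rw [hB i a k d h1, zero_mul]
  · intro i
    ext a c
    simp only [diagBlock, Matrix.of_apply, Matrix.mul_apply, Fintype.sum_sigma]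
    refine Fintype.sum_eq_single i fun k hk => Finset.sum_eq_zero fun d _ => ?_
    by_cases h1 : k ≤ i
    · rw [hK k d i c fun h2 => hk (le_antisymm h1 h2), mul_zero]
    · rw [hB i a k d h1, zero_mul]

theorem aux_main {P : Type*} [PartialOrder P] [Fintype P] [DecidableEq P]
    {n m : P → ℕ}
    (A : Matrix (Σ i : P, Fin (n i)) (Σ j : P, Fin (n j)) ℝ)
    (B : Matrix (Σ i : P, Fin (n i)) (Σ j : P, Fin (m j)) ℝ)
    (hA : BlockIncidence A) (hB : BlockIncidence B)
    (K : Matrix (Σ i : P, Fin (m i)) (Σ j : P, Fin (n j)) ℝ) (hK : BlockIncidence K) :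
    IsHurwitz (A + B * K) ↔
      ∀ i, IsHurwitz (diagBlock A i + diagBlock B i * diagBlock K i) := by
  obtain ⟨h1, h2⟩ := aux_mul B K hB hK
  rw [aux_hurwitz]
  · refine forall_congr' fun i => ?_
    rw [← h2]
    rfl
  · intro i a j c h
    rw [Matrix.add_apply, hA i a j c h, h1 i a j c h, add_zero]

/-- A poset-causal pair `(A, B)` admits a static poset-causal stabilizing feedback iff all
the diagonal sub-pairs `(A_ii, B_ii)` are stabilizable; moreover in that case the feedback
can be chosen block diagonal. -/
theorem blockIncidence_static_stabilizable_iff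
    {P : Type*} [PartialOrder P] [Fintype P] [DecidableEq P]
    (n m : P → ℕ)
    (A : Matrix (Σ i : P, Fin (n i)) (Σ j : P, Fin (n j)) ℝ)
    (B : Matrix (Σ i : P, Fin (n i)) (Σ j : P, Fin (m j)) ℝ)
    (hA : BlockIncidence A) (hB : BlockIncidence B) :
    ((∃ K : Matrix (Σ i : P, Fin (m i)) (Σ j : P, Fin (n j)) ℝ,
        BlockIncidence K ∧ IsHurwitz (A + B * K)) ↔
      ∀ i : P, IsStabilizable (diagBlock A i) (diagBlock B i)) ∧
    ((∀ i : P, IsStabilizable (diagBlock A i) (diagBlock B i)) →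
      ∃ K : Matrix (Σ i : P, Fin (m i)) (Σ j : P, Fin (n j)) ℝ,
        (∀ (i : P) (a : Fin (m i)) (j : P) (b : Fin (n j)), i ≠ j → K ⟨i, a⟩ ⟨j, b⟩ = 0) ∧
        IsHurwitz (A + B * K)) := by
  have back : (∀ i : P, IsStabilizable (diagBlock A i) (diagBlock B i)) →
      ∃ K : Matrix (Σ i : P, Fin (m i)) (Σ j : P, Fin (n j)) ℝ,
        (∀ (i : P) (a : Fin (m i)) (j : P) (b : Fin (n j)), i ≠ j → K ⟨i, a⟩ ⟨j, b⟩ = 0) ∧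
        IsHurwitz (A + B * K) := by
    intro h
    choose k hk using h
    have h0 : ∀ (i : P) (a : Fin (m i)) (j : P) (b : Fin (n j)), i ≠ j →
        Matrix.blockDiagonal' k ⟨i, a⟩ ⟨j, b⟩ = 0 :=
      fun i a j b hij => Matrix.blockDiagonal'_apply_ne k a b hij
    refine ⟨Matrix.blockDiagonal' k, h0, ?_⟩
    rw [aux_main A B hA hB _ fun i a j b hij => h0 i a j b fun e => hij e.ge]
    intro i
    have : diagBlock (Matrix.blockDiagonal' k) i = k i := by
      ext a b
      simp [diagBlock]
    rw [this]
    exact hk i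
  refine ⟨⟨?_, fun h => ?_⟩, back⟩
  · rintro ⟨K, hK, hH⟩ i
    exact ⟨diagBlock K i, (aux_main A B hA hB K hK).1 hH i⟩
  · obtain ⟨K, h0, hH⟩ := back h
    exact ⟨K, fun i a j b hij => h0 i a j b fun e => hij e.ge, hH⟩
end
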